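/- arXiv:1108.4195 — 5 statements merged into one kernel-verified Lean document; each statement's English description precedes it below -/
import Mathlib

section
/- For a closed continuous map f : X → Y from a metrizable Baire space X to a topological space Y the following conditions are equivalent: (1) f is skeletal; (2) f is skeletal at some dense subset of X; (3) f is densely open; (4) f is open at some dense Gδ-subset of X. -/
open Set Topology

/-- A continuous map `f : X → Y` is *skeletal* if for every non-empty open `U ⊆ X` the
closure of `f(U)` has non-empty interior. -/
def Skeletal {X Y : Type*} [TopologicalSpace X] [TopologicalSpace Y] (f : X → Y) : Prop :=
  ∀ U : Set X, IsOpen U → U.Nonempty → (interior (closure (f '' U))).Nonempty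

/-- `f` is *skeletal at a point* `x` if for each neighborhood `U` of `x` the closure of
`f(U)` has non-empty interior. -/
def SkeletalAtPoint {X Y : Type*} [TopologicalSpace X] [TopologicalSpace Y]
    (f : X → Y) (x : X) : Prop :=
  ∀ U ∈ 𝓝 x, (interior (closure (f '' U))).Nonempty

/-- `f` is *open at a point* `x` if for each neighborhood `U` of `x` the image `f(U)` is a
neighborhood of `f x`. -/
def OpenAtPoint {X Y : Type*} [TopologicalSpace X] [TopologicalSpace Y]
    (f : X → Y) (x : X) : Prop :=
  ∀ U ∈ 𝓝 x, f '' U ∈ 𝓝 (f x)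

/-!
For a closed skeletal map `f` on a regular space and an open set `G`, shrinking open sets to ones
with closure inside `G` shows that the points of `G` mapped into the interior of `f '' G` are dense
in `G`. By continuity they form an open set, so letting `G` range over an open cover yields a dense
open set. Along a sequence of covers whose stars form neighborhood bases, Baire's theorem makes the
intersection of these sets dense, and `f` is open at each of its points.
-/

section Development

variable {X : Type*}

/-- A *development* of a topological space: a sequence of open covers whose stars at each point
form a neighborhood basis there. The star of `x` is not named: that it is contained in `U` is
expressed by every member of the cover containing `x` being contained in `U`. -/
structure IsDevelopment [TopologicalSpace X] (𝒰 : ℕ → Set (Set X)) : Prop where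
  isOpen : ∀ n, ∀ G ∈ 𝒰 n, IsOpen G
  sUnion_eq_univ : ∀ n, ⋃₀ 𝒰 n = univ
  exists_star_subset : ∀ x, ∀ U ∈ 𝓝 x, ∃ n, ∀ G ∈ 𝒰 n, x ∈ G → G ⊆ U

theorem isDevelopment_range_ball [PseudoMetricSpace X] {r : ℕ → ℝ} (hr_pos : ∀ n, 0 < r n)
    (hr_lim : Filter.Tendsto r Filter.atTop (𝓝 0)) :
    IsDevelopment fun n => range fun c : X => Metric.ball c (r n) where
  isOpen := by
    rintro n _ ⟨c, rfl⟩
    exact Metric.isOpen_ball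
  sUnion_eq_univ n := sUnion_eq_univ_iff.2 fun x =>
    ⟨_, mem_range_self x, Metric.mem_ball_self (hr_pos n)⟩
  exists_star_subset x U hU := by
    obtain ⟨ε, hε, hεU⟩ := Metric.mem_nhds_iff.1 hU
    obtain ⟨n, hn⟩ := (hr_lim.eventually_lt_const (half_pos hε)).exists
    refine ⟨n, ?_⟩
    rintro _ ⟨c, rfl⟩ hxc
    have hball : Metric.ball c (r n) ⊆ Metric.ball x ε :=
      Metric.ball_subset_ball' (by linarith [Metric.mem_ball'.1 hxc])
    exact hball.trans hεU

theorem exists_isDevelopment (X : Type*) [TopologicalSpace X]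
    [TopologicalSpace.PseudoMetrizableSpace X] :
    ∃ 𝒰 : ℕ → Set (Set X), IsDevelopment 𝒰 :=
  let _ := TopologicalSpace.pseudoMetrizableSpacePseudoMetric X
  ⟨_, isDevelopment_range_ball (fun _ => Nat.one_div_pos_of_nat)
    tendsto_one_div_add_atTop_nhds_zero_nat⟩

end Development

section Skeletal

variable {X Y : Type*} [TopologicalSpace X] [TopologicalSpace Y] {f : X → Y}

theorem OpenAtPoint.skeletalAtPoint {x : X} (hx : OpenAtPoint f x) : SkeletalAtPoint f x :=
  fun U hU => ⟨f x, mem_interior_iff_mem_nhds.2 (Filter.mem_of_superset (hx U hU) subset_closure)⟩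

theorem skeletal_of_dense_skeletalAtPoint {A : Set X} (hA : Dense A)
    (hfA : ∀ x ∈ A, SkeletalAtPoint f x) : Skeletal f := by
  intro U hU hne
  obtain ⟨x, hxU, hxA⟩ := hA.inter_open_nonempty U hU hne
  exact hfA x hxA U (hU.mem_nhds hxU)

theorem Skeletal.subset_closure_inter_preimage_interior_image [RegularSpace X]
    (hs : Skeletal f) (hcl : IsClosedMap f) {G : Set X} (hG : IsOpen G) :
    G ⊆ closure (G ∩ f ⁻¹' interior (f '' G)) := by
  intro x hxG
  rw [mem_closure_iff]
  intro V hV hxV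
  obtain ⟨U, ⟨hxU, hU⟩, hUGV⟩ :=
    (hasBasis_opens_closure x).mem_iff.1 ((hG.inter hV).mem_nhds ⟨hxG, hxV⟩)
  have himage : closure (f '' U) ⊆ f '' G :=
    (hcl.closure_image_subset U).trans (image_mono (hUGV.trans inter_subset_left))
  obtain ⟨y, hy⟩ := hs U hU ⟨x, hxU⟩
  obtain ⟨_, hz, z, hzU, rfl⟩ := mem_closure_iff.1 (interior_subset hy) _ isOpen_interior hy
  have hzGV : z ∈ G ∩ V := hUGV (subset_closure hzU)
  exact ⟨z, hzGV.2, hzGV.1, interior_mono himage hz⟩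

theorem Skeletal.dense_biUnion_inter_preimage_interior_image [RegularSpace X]
    (hs : Skeletal f) (hcl : IsClosedMap f) {𝒢 : Set (Set X)} (hopen : ∀ G ∈ 𝒢, IsOpen G)
    (hcover : ⋃₀ 𝒢 = univ) :
    Dense (⋃ G ∈ 𝒢, G ∩ f ⁻¹' interior (f '' G)) := by
  intro x
  obtain ⟨G, hG, hxG⟩ := sUnion_eq_univ_iff.1 hcover x
  exact closure_mono (subset_biUnion_of_mem (u := fun G => G ∩ f ⁻¹' interior (f '' G)) hG)
    (hs.subset_closure_inter_preimage_interior_image hcl (hopen G hG) hxG)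

theorem IsDevelopment.openAtPoint_of_mem_iInter {𝒰 : ℕ → Set (Set X)} (h𝒰 : IsDevelopment 𝒰)
    {x : X} (hx : x ∈ ⋂ n, ⋃ G ∈ 𝒰 n, G ∩ f ⁻¹' interior (f '' G)) : OpenAtPoint f x := by
  intro U hU
  obtain ⟨n, hn⟩ := h𝒰.exists_star_subset x U hU
  obtain ⟨G, hG, hxG, hfx⟩ := mem_iUnion₂.1 (mem_iInter.1 hx n)
  exact Filter.mem_of_superset (mem_interior_iff_mem_nhds.1 hfx) (image_mono (hn G hG hxG))

theorem Skeletal.exists_dense_isGδ_openAtPoint [RegularSpace X] [BaireSpace X]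
    {𝒰 : ℕ → Set (Set X)} (h𝒰 : IsDevelopment 𝒰) (hs : Skeletal f) (hf : Continuous f)
    (hcl : IsClosedMap f) :
    ∃ A : Set X, Dense A ∧ IsGδ A ∧ ∀ x ∈ A, OpenAtPoint f x := by
  have hopen (n : ℕ) : IsOpen (⋃ G ∈ 𝒰 n, G ∩ f ⁻¹' interior (f '' G)) :=
    isOpen_biUnion fun G hG => (h𝒰.isOpen n G hG).inter (isOpen_interior.preimage hf)
  have hdense (n : ℕ) : Dense (⋃ G ∈ 𝒰 n, G ∩ f ⁻¹' interior (f '' G)) :=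
    hs.dense_biUnion_inter_preimage_interior_image hcl (h𝒰.isOpen n) (h𝒰.sUnion_eq_univ n)
  exact ⟨_, dense_iInter_of_isOpen hopen hdense, .iInter_of_isOpen hopen,
    fun _ => h𝒰.openAtPoint_of_mem_iInter⟩

theorem skeletal_tfae_of_closedMap_general [RegularSpace X] [BaireSpace X]
    {𝒰 : ℕ → Set (Set X)} (h𝒰 : IsDevelopment 𝒰) (hf : Continuous f) (hcl : IsClosedMap f) :
    List.TFAE
      [Skeletal f,
       ∃ A : Set X, Dense A ∧ ∀ x ∈ A, SkeletalAtPoint f x,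
       ∃ A : Set X, Dense A ∧ ∀ x ∈ A, OpenAtPoint f x,
       ∃ A : Set X, Dense A ∧ IsGδ A ∧ ∀ x ∈ A, OpenAtPoint f x] := by
  tfae_have 1 → 4 := fun hs => hs.exists_dense_isGδ_openAtPoint h𝒰 hf hcl
  tfae_have 4 → 3 := fun ⟨A, hA, _, hfA⟩ => ⟨A, hA, hfA⟩
  tfae_have 3 → 2 := fun ⟨A, hA, hfA⟩ => ⟨A, hA, fun x hx => (hfA x hx).skeletalAtPoint⟩
  tfae_have 2 → 1 := fun ⟨_, hA, hfA⟩ => skeletal_of_dense_skeletalAtPoint hA hfA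
  tfae_finish

end Skeletal

/-- For a closed continuous map `f : X → Y` from a metrizable Baire space `X` the following
are equivalent: (1) `f` is skeletal; (2) `f` is skeletal at some dense subset of `X`;
(3) `f` is densely open; (4) `f` is open at some dense `Gδ`-subset of `X`. -/
theorem skeletal_tfae_of_closedMap {X Y : Type*} [TopologicalSpace X] [TopologicalSpace Y]
    [TopologicalSpace.MetrizableSpace X] [BaireSpace X]
    (f : X → Y) (hf : Continuous f) (hcl : IsClosedMap f) :
    List.TFAE
      [Skeletal f,
       ∃ A : Set X, Dense A ∧ ∀ x ∈ A, SkeletalAtPoint f x,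
       ∃ A : Set X, Dense A ∧ ∀ x ∈ A, OpenAtPoint f x,
       ∃ A : Set X, Dense A ∧ IsGδ A ∧ ∀ x ∈ A, OpenAtPoint f x] := by
  obtain ⟨_, h𝒰⟩ := exists_isDevelopment X
  exact skeletal_tfae_of_closedMap_general h𝒰 hf hcl
end

section
/- Every densely open commutative square of continuous maps is skeletal, i.e., if a commutative square 𝒟 (with p_Y ∘ f̃ = f ∘ p_X) is open at each point of some dense subset of X, then 𝒟 is skeletal at every point of X. -/
open Set Topology

/-- A commutative square (with top map `g' : X' → Y'`, bottom map `g : X → Y` and vertical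
maps `qX : X' → X`, `qY : Y' → Y`) is *skeletal at a point* `x ∈ X` if for each neighborhood
`U` of `x` there is a non-empty open `V ⊆ Y` with `V ⊆ cl (g '' U)` and
`qY ⁻¹' V ⊆ cl (g' '' (qX ⁻¹' U))`. -/
def SquareSkeletalAt {X Y X' Y' : Type*} [TopologicalSpace X] [TopologicalSpace Y]
    [TopologicalSpace X'] [TopologicalSpace Y']
    (g' : X' → Y') (g : X → Y) (qX : X' → X) (qY : Y' → Y) (x : X) : Prop :=
  ∀ U ∈ 𝓝 x, ∃ V : Set Y, IsOpen V ∧ V.Nonempty ∧ V ⊆ closure (g '' U) ∧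
    qY ⁻¹' V ⊆ closure (g' '' (qX ⁻¹' U))

/-- A commutative square is *open at a point* `x ∈ X` if for each neighborhood `U` of `x`
the point `g x` has a neighborhood `V ⊆ Y` with `V ⊆ g '' U` and
`qY ⁻¹' V ⊆ g' '' (qX ⁻¹' U)`. -/
def SquareOpenAt {X Y X' Y' : Type*} [TopologicalSpace X] [TopologicalSpace Y]
    [TopologicalSpace X'] [TopologicalSpace Y']
    (g' : X' → Y') (g : X → Y) (qX : X' → X) (qY : Y' → Y) (x : X) : Prop :=
  ∀ U ∈ 𝓝 x, ∃ V : Set Y, V ∈ 𝓝 (g x) ∧ V ⊆ g '' U ∧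
    qY ⁻¹' V ⊆ g' '' (qX ⁻¹' U)

section

variable {X Y X' Y' : Type*} [TopologicalSpace X] [TopologicalSpace Y] [TopologicalSpace X']
  [TopologicalSpace Y'] {g' : X' → Y'} {g : X → Y} {qX : X' → X} {qY : Y' → Y} {x : X}

theorem SquareOpenAt.squareSkeletalAt (h : SquareOpenAt g' g qX qY x) :
    SquareSkeletalAt g' g qX qY x := by
  intro U hU
  obtain ⟨V, hV, hVU, hVU'⟩ := h U hU
  exact ⟨interior V, isOpen_interior, ⟨g x, mem_interior_iff_mem_nhds.2 hV⟩,
    interior_subset.trans (hVU.trans subset_closure),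
    (preimage_mono interior_subset).trans (hVU'.trans subset_closure)⟩

theorem isClosed_setOf_squareSkeletalAt : IsClosed {a | SquareSkeletalAt g' g qX qY a} := by
  refine isClosed_of_closure_subset fun x hx U hU ↦ ?_
  obtain ⟨a, haU, ha⟩ := mem_closure_iff_nhds.1 hx (interior U) (interior_mem_nhds.2 hU)
  exact ha U (mem_interior_iff_mem_nhds.1 haU)

theorem squareSkeletal_of_denselyOpen_general (hx : x ∈ closure {a | SquareOpenAt g' g qX qY a}) :
    SquareSkeletalAt g' g qX qY x :=
  closure_minimal (fun _ ha ↦ ha.squareSkeletalAt) isClosed_setOf_squareSkeletalAt hx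

end

/-- Every densely open commutative square of continuous maps is skeletal: if a commutative
square `𝒟` (with `pY ∘ f̃ = f ∘ pX`) is open at each point of some dense subset of `X`, then
`𝒟` is skeletal at every point of `X`. -/
theorem squareSkeletal_of_denselyOpen
    {X Y Xt Yt : Type*} [TopologicalSpace X] [TopologicalSpace Y]
    [TopologicalSpace Xt] [TopologicalSpace Yt]
    (ft : Xt → Yt) (f : X → Y) (pX : Xt → X) (pY : Yt → Y)
    (hft : Continuous ft) (hf : Continuous f) (hpX : Continuous pX) (hpY : Continuous pY)
    (hcomm : ∀ z : Xt, pY (ft z) = f (pX z))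
    (hdo : ∃ A : Set X, Dense A ∧ ∀ x ∈ A, SquareOpenAt ft f pX pY x) :
    ∀ x : X, SquareSkeletalAt ft f pX pY x := by
  obtain ⟨A, hA, hopen⟩ := hdo
  exact fun x ↦ squareSkeletal_of_denselyOpen_general (hA.mono hopen x)
end

section
/- Let 𝒟 be a commutative square of continuous maps f̃ : X̃ → Ỹ, f : X → Y, p_X : X̃ → X, p_Y : Ỹ → Y with p_Y ∘ f̃ = f ∘ p_X, such that f̃ is a closed map, p_Y is surjective, and X is a metrizable Baire space. Then the following conditions are equivalent: (1) 𝒟 is skeletal; (2) 𝒟 is skeletal at some dense subset of X; (3) 𝒟 is densely open; (4) 𝒟 is open at some dense Gδ-subset of X. -/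
open Set Topology

/-!
If `f̃` is closed, then for a closed neighborhood `K` of a point where the square is skeletal,
the closure in the definition of skeletality disappears: `f̃ (pX⁻¹ K)` contains the fibers of `pY`
over a neighborhood of `f u` for points `u` arbitrarily close to that point, and these `u` form an
open set. Taking `K` small, for each entourage `N` the `u` that work with the `N`-ball around `u`
contain a dense open set. Countably many entourages suffice, so openness holds residually, which
in a Baire space means on a dense `Gδ`-set.
-/

open Filter UniformSpace
open scoped Uniformity

theorem isOpen_setOfPred_mem_comap_nhds {X Y Z : Type*} [TopologicalSpace X] [TopologicalSpace Y]
    {f : X → Y} (hf : Continuous f) (p : Z → Y) (S : Set Z) :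
    IsOpen {x | S ∈ comap p (𝓝 (f x))} := by
  simp only [mem_comap'']
  exact isOpen_setOfPred_eventually_nhds.preimage hf

section Topological

variable {X Y Xt Yt : Type*} [TopologicalSpace X] [TopologicalSpace Y]
  [TopologicalSpace Xt] [TopologicalSpace Yt]
  {ft : Xt → Yt} {f : X → Y} {pX : Xt → X} {pY : Yt → Y} {x : X}

theorem SquareOpenAt.squareSkeletalAt_s5 (h : SquareOpenAt ft f pX pY x) :
    SquareSkeletalAt ft f pX pY x := by
  intro U hU
  obtain ⟨V, hV, hVf, hVft⟩ := h U hU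
  exact ⟨interior V, isOpen_interior, ⟨f x, mem_interior_iff_mem_nhds.2 hV⟩,
    interior_subset.trans (hVf.trans subset_closure),
    (preimage_mono interior_subset).trans (hVft.trans subset_closure)⟩

theorem isClosed_setOfPred_squareSkeletalAt : IsClosed {x | SquareSkeletalAt ft f pX pY x} := by
  refine isClosed_of_closure_subset fun x hx U hU ↦ ?_
  obtain ⟨a, haU, ha⟩ := mem_closure_iff_nhds.1 hx _ (interior_mem_nhds.2 hU)
  exact ha U (mem_interior_iff_mem_nhds.1 haU)

theorem squareOpenAt_iff_comap_nhds_le (hcomm : ∀ z, pY (ft z) = f (pX z))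
    (hsurj : Function.Surjective pY) :
    SquareOpenAt ft f pX pY x ↔ comap pY (𝓝 (f x)) ≤ map ft (comap pX (𝓝 x)) := by
  rw [(((𝓝 x).basis_sets.comap pX).map ft).ge_iff]
  refine forall₂_congr fun U _ ↦
    ⟨fun ⟨V, hV, _, hVft⟩ ↦ ⟨V, hV, hVft⟩, fun ⟨V, hV, hVft⟩ ↦ ⟨V, hV, ?_, hVft⟩⟩
  calc V = pY '' (pY ⁻¹' V) := (image_preimage_eq V hsurj).symm
    _ ⊆ pY '' (ft '' (pX ⁻¹' U)) := image_mono hVft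
    _ = f '' (pX '' (pX ⁻¹' U)) := image_comm hcomm
    _ ⊆ f '' U := image_mono (image_preimage_subset pX U)

theorem SquareSkeletalAt.frequently_image_preimage_mem_comap_nhds
    (h : SquareSkeletalAt ft f pX pY x) (hpX : Continuous pX) (hclosed : IsClosedMap ft)
    {K : Set X} (hK : IsClosed K) (hKx : K ∈ 𝓝 x) :
    ∃ᶠ u in 𝓝 x, ft '' (pX ⁻¹' K) ∈ comap pY (𝓝 (f u)) := by
  refine frequently_iff.2 fun {W} hW ↦ ?_
  obtain ⟨V, hV, ⟨v, hv⟩, hVf, hVft⟩ := h (W ∩ K) (inter_mem hW hKx)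
  obtain ⟨_, huV, u, hu, rfl⟩ := mem_closure_iff.1 (hVf hv) V hV hv
  refine ⟨u, hu.1, V, hV.mem_nhds huV, hVft.trans ?_⟩
  exact closure_minimal (image_mono (preimage_mono inter_subset_right))
    (hclosed _ (hK.preimage hpX))

end Topological

section Uniform

variable {X Y Xt Yt : Type*} [UniformSpace X] [TopologicalSpace Y]
  [TopologicalSpace Xt] [TopologicalSpace Yt]
  {ft : Xt → Yt} {f : X → Y} {pX : Xt → X} {pY : Yt → Y} {N : Set (X × X)}

theorem SquareSkeletalAt.mem_closure_interior_setOfPred_ball {x : X}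
    (h : SquareSkeletalAt ft f pX pY x) (hf : Continuous f) (hpX : Continuous pX)
    (hclosed : IsClosedMap ft) (hN : N ∈ 𝓤 X) :
    x ∈ closure (interior {u | ft '' (pX ⁻¹' ball u N) ∈ comap pY (𝓝 (f u))}) := by
  obtain ⟨M, hM, _, hMN⟩ := comp_symm_mem_uniformity_sets hN
  obtain ⟨K, hKx, hK, hKM⟩ := exists_mem_nhds_isClosed_subset (ball_mem_nhds x hM)
  have hKball : ∀ w ∈ K, K ⊆ ball w N := fun w hw ↦
    hKM.trans (ball_subset_of_comp_subset (mem_ball_symmetry.1 (hKM hw)) hMN)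
  have hfreq : ∃ᶠ u in 𝓝 x, ft '' (pX ⁻¹' K) ∈ comap pY (𝓝 (f u)) :=
    h.frequently_image_preimage_mem_comap_nhds hpX hclosed hK hKx
  refine mem_closure_iff_frequently.2 <|
    (hfreq.and_eventually (eventually_eventually_nhds.2 hKx)).mono fun u ⟨hu, huK⟩ ↦
      mem_interior_iff_mem_nhds.2 ?_
  filter_upwards [(isOpen_setOfPred_mem_comap_nhds hf pY _).mem_nhds hu, huK] with w hw hwK
  exact mem_of_superset hw (image_mono (preimage_mono (hKball w hwK)))

end Uniform

section PseudoMetrizable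

open TopologicalSpace

variable {X Y Xt Yt : Type*} [TopologicalSpace X] [PseudoMetrizableSpace X] [TopologicalSpace Y]
  [TopologicalSpace Xt] [TopologicalSpace Yt]
  {ft : Xt → Yt} {f : X → Y} {pX : Xt → X} {pY : Yt → Y}

theorem eventually_residual_squareOpenAt (h : ∀ x, SquareSkeletalAt ft f pX pY x)
    (hf : Continuous f) (hpX : Continuous pX) (hcomm : ∀ z, pY (ft z) = f (pX z))
    (hclosed : IsClosedMap ft) (hsurj : Function.Surjective pY) :
    ∀ᶠ x in residual X, SquareOpenAt ft f pX pY x := by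
  let := pseudoMetrizableSpaceUniformity X
  have := pseudoMetrizableSpaceUniformity_countably_generated X
  obtain ⟨N, hN⟩ := (𝓤 X).exists_antitone_basis
  have hres (n : ℕ) : ∀ᶠ x in residual X, ft '' (pX ⁻¹' ball x (N n)) ∈ comap pY (𝓝 (f x)) :=
    mem_of_superset (residual_of_dense_open isOpen_interior fun x ↦
      (h x).mem_closure_interior_setOfPred_ball hf hpX hclosed (hN.mem n))
      interior_subset
  filter_upwards [eventually_countable_forall.2 hres] with x hx
  rw [squareOpenAt_iff_comap_nhds_le hcomm hsurj,
    (((nhds_basis_uniformity' hN.1).comap pX).map ft).ge_iff]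
  exact fun n _ ↦ hx n

theorem squareSkeletal_tfae_general [BaireSpace X] (hf : Continuous f) (hpX : Continuous pX)
    (hcomm : ∀ z, pY (ft z) = f (pX z)) (hclosed : IsClosedMap ft)
    (hsurj : Function.Surjective pY) :
    List.TFAE
      [∀ x : X, SquareSkeletalAt ft f pX pY x,
       ∃ A : Set X, Dense A ∧ ∀ x ∈ A, SquareSkeletalAt ft f pX pY x,
       ∃ A : Set X, Dense A ∧ ∀ x ∈ A, SquareOpenAt ft f pX pY x,
       ∃ A : Set X, Dense A ∧ IsGδ A ∧ ∀ x ∈ A, SquareOpenAt ft f pX pY x] := by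
  tfae_have 4 → 3 := fun ⟨A, hA, _, h⟩ ↦ ⟨A, hA, h⟩
  tfae_have 3 → 2 := fun ⟨A, hA, h⟩ ↦ ⟨A, hA, fun x hx ↦ (h x hx).squareSkeletalAt_s5⟩
  tfae_have 2 → 1 := fun ⟨_, hA, h⟩ ↦ hA.induction h isClosed_setOfPred_squareSkeletalAt
  tfae_have 1 → 4 := fun h ↦ by
    obtain ⟨A, hAopen, hAGδ, hA⟩ := mem_residual.1 <|
      eventually_residual_squareOpenAt h hf hpX hcomm hclosed hsurj
    exact ⟨A, hA, hAGδ, hAopen⟩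
  tfae_finish

end PseudoMetrizable

/-- For a commutative square `𝒟` of continuous maps `f̃ : X̃ → Ỹ`, `f : X → Y`,
`pX : X̃ → X`, `pY : Ỹ → Y` with `pY ∘ f̃ = f ∘ pX`, such that `f̃` is a closed map, `pY` is
surjective and `X` is a metrizable Baire space, the following are equivalent:
(1) `𝒟` is skeletal; (2) `𝒟` is skeletal at some dense subset of `X`; (3) `𝒟` is densely
open; (4) `𝒟` is open at some dense `Gδ`-subset of `X`. -/
theorem squareSkeletal_tfae
    {X Y Xt Yt : Type*} [TopologicalSpace X] [TopologicalSpace Y]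
    [TopologicalSpace Xt] [TopologicalSpace Yt]
    [TopologicalSpace.MetrizableSpace X] [BaireSpace X]
    (ft : Xt → Yt) (f : X → Y) (pX : Xt → X) (pY : Yt → Y)
    (hft : Continuous ft) (hf : Continuous f) (hpX : Continuous pX) (hpY : Continuous pY)
    (hcomm : ∀ z : Xt, pY (ft z) = f (pX z))
    (hclosed : IsClosedMap ft) (hsurj : Function.Surjective pY) :
    List.TFAE
      [∀ x : X, SquareSkeletalAt ft f pX pY x,
       ∃ A : Set X, Dense A ∧ ∀ x ∈ A, SquareSkeletalAt ft f pX pY x,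
       ∃ A : Set X, Dense A ∧ ∀ x ∈ A, SquareOpenAt ft f pX pY x,
       ∃ A : Set X, Dense A ∧ IsGδ A ∧ ∀ x ∈ A, SquareOpenAt ft f pX pY x] :=
  squareSkeletal_tfae_general hf hpX hcomm hclosed hsurj
end

section
/- Let 𝒟 be a skeletal commutative square of continuous maps f̃ : X̃ → Ỹ, f : X → Y, p_X : X̃ → X, p_Y : Ỹ → Y with p_Y ∘ f̃ = f ∘ p_X, such that f̃ is a closed map, p_Y is surjective, and X is a regular topological space. Then for each non-empty open subset U ⊆ X there is a non-empty open set V ⊆ Y such that V ⊆ f(U) and p_Y⁻¹(V) ⊆ f̃(p_X⁻¹(U)). -/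
open Set Topology

/-!
In a regular space every neighborhood contains a closed one. The preimage of a closed set under
`pX` is closed and so is its image under `ft`, so the closure in the lifted inclusion is
superfluous; surjectivity of `pY` then transfers the inclusion from `Yt` down to `Y`.
-/

theorem subset_image_of_preimage_subset_image {X Y Xt Yt : Type*}
    {ft : Xt → Yt} {f : X → Y} {pX : Xt → X} {pY : Yt → Y} {U : Set X} {V : Set Y}
    (hcomm : ∀ z, pY (ft z) = f (pX z)) (hsurj : Function.Surjective pY)
    (hV : pY ⁻¹' V ⊆ ft '' (pX ⁻¹' U)) : V ⊆ f '' U :=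
  calc
    V = pY '' (pY ⁻¹' V) := (image_preimage_eq V hsurj).symm
    _ ⊆ pY '' (ft '' (pX ⁻¹' U)) := image_mono hV
    _ = f '' (pX '' (pX ⁻¹' U)) := image_comm hcomm
    _ ⊆ f '' U := image_mono (image_preimage_subset pX U)

section Skeletal

variable {X Y Xt Yt : Type*} [TopologicalSpace X] [TopologicalSpace Y]
  [TopologicalSpace Xt] [TopologicalSpace Yt] [RegularSpace X]
  {ft : Xt → Yt} {f : X → Y} {pX : Xt → X} {pY : Yt → Y} {x : X} {U : Set X}

theorem SquareSkeletalAt.exists_isOpen_preimage_subset_image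
    (hsk : SquareSkeletalAt ft f pX pY x) (hpX : Continuous pX) (hclosed : IsClosedMap ft)
    (hU : U ∈ 𝓝 x) :
    ∃ V : Set Y, IsOpen V ∧ V.Nonempty ∧ pY ⁻¹' V ⊆ ft '' (pX ⁻¹' U) := by
  obtain ⟨K, hK, hKclosed, hKU⟩ := exists_mem_nhds_isClosed_subset hU
  obtain ⟨V, hVopen, hVne, -, hV⟩ := hsk K hK
  refine ⟨V, hVopen, hVne, ?_⟩
  calc
    pY ⁻¹' V ⊆ closure (ft '' (pX ⁻¹' K)) := hV
    _ = ft '' (pX ⁻¹' K) := (hclosed _ (hKclosed.preimage hpX)).closure_eq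
    _ ⊆ ft '' (pX ⁻¹' U) := image_mono (preimage_mono hKU)

theorem squareSkeletal_claim1_general
    (hsk : SquareSkeletalAt ft f pX pY x) (hpX : Continuous pX)
    (hcomm : ∀ z, pY (ft z) = f (pX z)) (hclosed : IsClosedMap ft)
    (hsurj : Function.Surjective pY) (hU : U ∈ 𝓝 x) :
    ∃ V : Set Y, IsOpen V ∧ V.Nonempty ∧ V ⊆ f '' U ∧ pY ⁻¹' V ⊆ ft '' (pX ⁻¹' U) := by
  obtain ⟨V, hVopen, hVne, hV⟩ := hsk.exists_isOpen_preimage_subset_image hpX hclosed hU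
  exact ⟨V, hVopen, hVne, subset_image_of_preimage_subset_image hcomm hsurj hV, hV⟩

end Skeletal

/-- If `𝒟` is a skeletal commutative square of continuous maps (with `pY ∘ f̃ = f ∘ pX`),
`f̃` is a closed map, `pY` is surjective and `X` is regular, then for every non-empty open
`U ⊆ X` there is a non-empty open `V ⊆ Y` with `V ⊆ f '' U` and
`pY ⁻¹' V ⊆ f̃ '' (pX ⁻¹' U)`. -/
theorem squareSkeletal_claim1
    {X Y Xt Yt : Type*} [TopologicalSpace X] [TopologicalSpace Y]
    [TopologicalSpace Xt] [TopologicalSpace Yt] [RegularSpace X]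
    (ft : Xt → Yt) (f : X → Y) (pX : Xt → X) (pY : Yt → Y)
    (hft : Continuous ft) (hf : Continuous f) (hpX : Continuous pX) (hpY : Continuous pY)
    (hcomm : ∀ z : Xt, pY (ft z) = f (pX z))
    (hclosed : IsClosedMap ft) (hsurj : Function.Surjective pY)
    (hsk : ∀ x : X, SquareSkeletalAt ft f pX pY x) :
    ∀ U : Set X, IsOpen U → U.Nonempty →
      ∃ V : Set Y, IsOpen V ∧ V.Nonempty ∧ V ⊆ f '' U ∧ pY ⁻¹' V ⊆ ft '' (pX ⁻¹' U) := by
  rintro U hU ⟨x, hx⟩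
  exact squareSkeletal_claim1_general (hsk x) hpX hcomm hclosed hsurj (hU.mem_nhds hx)
end

section
/- Let {f_α}_{α∈A} : 𝒮_X → 𝒮_Y be a morphism between inverse spectra 𝒮_X = {X_α, p_α^β, A} and 𝒮_Y = {Y_α, π_α^β, A} over the same directed set A, and suppose both spectra have surjective limit projections. If for every index α ∈ A the limit ↓α-square of the morphism is skeletal, then the limit map lim f_α : lim 𝒮_X → lim 𝒮_Y is skeletal. -/
open Set Topology

universe u

/-- A commutative square (top map `g' : X' → Y'`, bottom map `g : X → Y`, vertical maps
`qX : X' → X`, `qY : Y' → Y`) is *skeletal* if for each point `x ∈ X` and each neighborhood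
`U` of `x` there is a non-empty open `V ⊆ Y` with `V ⊆ cl (g '' U)` and
`qY ⁻¹' V ⊆ cl (g' '' (qX ⁻¹' U))`. -/
def SkeletalSquare {X Y X' Y' : Type*} [TopologicalSpace X] [TopologicalSpace Y]
    [TopologicalSpace X'] [TopologicalSpace Y']
    (g' : X' → Y') (g : X → Y) (qX : X' → X) (qY : Y' → Y) : Prop :=
  ∀ x : X, ∀ U ∈ 𝓝 x, ∃ V : Set Y, IsOpen V ∧ V.Nonempty ∧ V ⊆ closure (g '' U) ∧
    qY ⁻¹' V ⊆ closure (g' '' (qX ⁻¹' U))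

/-- An *inverse spectrum* over a partially ordered index set `A`: topological spaces `X a`
together with continuous bonding maps `bond h : X b → X a` for `h : a ≤ b`, satisfying the
usual identity and composition laws. -/
structure InvSpec (A : Type u) [PartialOrder A] : Type (u + 1) where
  X : A → Type u
  [topX : ∀ a, TopologicalSpace (X a)]
  bond : ∀ {a b : A}, a ≤ b → X b → X a
  bond_cont : ∀ {a b : A} (h : a ≤ b), Continuous (bond h)
  bond_refl : ∀ (a : A) (x : X a), bond le_rfl x = x
  bond_comp : ∀ {a b c : A} (hab : a ≤ b) (hbc : b ≤ c) (x : X c),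
    bond hab (bond hbc x) = bond (hab.trans hbc) x

attribute [instance] InvSpec.topX

variable {A : Type u} [PartialOrder A]

/-- The limit `lim 𝒮` of an inverse spectrum, as the set of threads in the product. -/
def InvSpec.limitSet (S : InvSpec A) : Set (∀ a, S.X a) :=
  {x | ∀ (a b : A) (h : a ≤ b), S.bond h (x b) = x a}

/-- The limit projection `p_a : lim 𝒮 → X a`. -/
def InvSpec.proj (S : InvSpec A) (a : A) : S.limitSet → S.X a := fun x => x.1 a

/-- A *morphism* between two inverse spectra over the same index set: a family of continuous
maps `f a : X a → Y a` commuting with the bonding maps. -/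
structure SpecMor (S T : InvSpec A) where
  maps : ∀ a, S.X a → T.X a
  maps_cont : ∀ a, Continuous (maps a)
  comm : ∀ {a b : A} (h : a ≤ b) (x : S.X b), maps a (S.bond h x) = T.bond h (maps b x)

/-- The limit map `lim f_a : lim 𝒮_X → lim 𝒮_Y` of a morphism of spectra. -/
def SpecMor.limMap {S T : InvSpec A} (F : SpecMor S T) : S.limitSet → T.limitSet :=
  fun x => ⟨fun a => F.maps a (x.1 a),
    fun a b h => by rw [← F.comm h (x.1 b), x.2 a b h]⟩

/-- The *limit `↓a`-square* of a morphism (top map `lim f`, bottom map `f a`, verticals the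
limit projections) is skeletal. -/
def LimitSquareSkeletal {S T : InvSpec A} (F : SpecMor S T) (a : A) : Prop :=
  SkeletalSquare F.limMap (F.maps a) (S.proj a) (T.proj a)

/-- The *bonding `↓_a^b`-square* of a morphism (top map `f b`, bottom map `f a`, verticals
the bonding maps) is skeletal. -/
def BondingSquareSkeletal {S T : InvSpec A} (F : SpecMor S T) {a b : A} (h : a ≤ b) : Prop :=
  SkeletalSquare (F.maps b) (F.maps a) (S.bond h) (T.bond h)

/-- A family of non-empty open sets is a *π-base* if every non-empty open set contains a
member of the family. -/
def IsPiBase {Z : Type*} [TopologicalSpace Z] (B : Set (Set Z)) : Prop :=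
  (∀ U ∈ B, IsOpen U ∧ U.Nonempty) ∧
  ∀ U : Set Z, IsOpen U → U.Nonempty → ∃ V ∈ B, V ⊆ U

/-- The *π-weight* of a space: the smallest cardinality of a π-base. -/
noncomputable def piWeight (Z : Type u) [TopologicalSpace Z] : Cardinal.{u} :=
  ⨅ B : {B : Set (Set Z) // IsPiBase B}, Cardinal.mk B.1

/-- A partially ordered set is *κ-directed* if every subset of cardinality `≤ κ` has an
upper bound. -/
def CardDirected (A : Type u) [PartialOrder A] (κ : Cardinal.{u}) : Prop :=
  ∀ K : Set A, Cardinal.mk K ≤ κ → ∃ ub : A, ∀ k ∈ K, k ≤ ub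

/-- A partially ordered set is *ω-complete* if every (non-empty) countable chain has a least
upper bound. -/
def OmegaComplete (A : Type u) [PartialOrder A] : Prop :=
  ∀ C : Set A, C.Countable → C.Nonempty → IsChain (· ≤ ·) C → ∃ b : A, IsLUB C b

/-- The limit of the restriction of a spectrum to a subset `C` of the index set. -/
def InvSpec.limitSetOn (S : InvSpec A) (C : Set A) : Set (∀ c : C, S.X c) :=
  {x | ∀ (c d : C) (h : (c : A) ≤ (d : A)), S.bond h (x d) = x c}

/-- The canonical map `X g → lim {X a, a ∈ C}` when `g` is a least upper bound of `C`. -/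
def InvSpec.toLimitOn (S : InvSpec A) {C : Set A} {g : A} (hg : IsLUB C g) :
    S.X g → S.limitSetOn C :=
  fun xg => ⟨fun c => S.bond (hg.1 c.2) xg, fun c d h => S.bond_comp h (hg.1 d.2) xg⟩

/-- A spectrum is *continuous* (τ-continuous) if for every non-empty directed subset `C` of
the index set having a least upper bound `g`, the canonical map `X g → lim {X a, a ∈ C}` is
a homeomorphism. -/
def InvSpec.IsContinuousSpectrum (S : InvSpec A) : Prop :=
  ∀ (C : Set A) (g : A), C.Nonempty → DirectedOn (· ≤ ·) C → ∀ hg : IsLUB C g,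
    IsHomeomorph (S.toLimitOn hg)

/-- A *πτ-spectrum*: all spaces have π-weight `≤ τ`, the index set is τ-directed and
ω-complete, and the spectrum is τ-continuous. -/
def IsPiTauSpectrum (τ : Cardinal.{u}) (S : InvSpec A) : Prop :=
  (∀ a : A, piWeight (S.X a) ≤ τ) ∧ CardDirected A τ ∧ OmegaComplete A ∧
    S.IsContinuousSpectrum

/-- A subset `C` of a directed poset is *cofinal* if every element of the poset is below
some element of `C`. -/
def IsCofinalSub {A : Type u} [PartialOrder A] (C : Set A) : Prop :=
  ∀ a : A, ∃ b ∈ C, a ≤ b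

/-- A subset `C` is *τ-closed* (equivalently ω-closed) if for each (non-empty) directed
subset `D ⊆ C` having a least upper bound in `A`, this least upper bound belongs to `C`. -/
def IsSupClosed {A : Type u} [PartialOrder A] (C : Set A) : Prop :=
  ∀ D ⊆ C, D.Nonempty → DirectedOn (· ≤ ·) D → ∀ g : A, IsLUB D g → g ∈ C

/-!
A neighborhood in `lim 𝒮_X` contains `p_b⁻¹(V)` for a single index `b`, which may be taken in a
given cofinal set. The skeletal `↓b`-square turns `V` into a non-empty open `W` for which the open
set `π_b⁻¹(W)` lies in the closure of the image of `p_b⁻¹(V)`; density of the range of `π_b` keeps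
`π_b⁻¹(W)` non-empty.
-/

theorem SkeletalSquare.nonempty_interior_closure_image {X Y X' Y' : Type*}
    [TopologicalSpace X] [TopologicalSpace Y] [TopologicalSpace X'] [TopologicalSpace Y']
    {g' : X' → Y'} {g : X → Y} {qX : X' → X} {qY : Y' → Y} (h : SkeletalSquare g' g qX qY)
    (hqY : Continuous qY) (hqY_dense : DenseRange qY) {x : X} {V : Set X} (hV : V ∈ 𝓝 x) :
    (interior (closure (g' '' (qX ⁻¹' V)))).Nonempty := by
  obtain ⟨W, hW, hW_ne, -, hWV⟩ := h x V hV
  obtain ⟨y, hy⟩ := hqY_dense.exists_mem_open hW hW_ne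
  exact ⟨y, interior_maximal hWV (hW.preimage hqY) hy⟩

namespace InvSpec

open Filter

theorem continuous_proj (S : InvSpec A) (a : A) : Continuous (S.proj a) :=
  (continuous_apply a).comp continuous_subtype_val

theorem bond_comp_proj (S : InvSpec A) {a b : A} (h : a ≤ b) :
    S.bond h ∘ S.proj b = S.proj a :=
  funext fun x => x.2 a b h

theorem nhds_eq_iInf_comap_proj (S : InvSpec A) (x : S.limitSet) :
    𝓝 x = ⨅ a, comap (S.proj a) (𝓝 (S.proj a x)) := by
  simp only [nhds_subtype, nhds_pi, Filter.pi, comap_iInf, comap_comap]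
  rfl

theorem antitone_comap_proj_nhds (S : InvSpec A) (x : S.limitSet) :
    Antitone fun a => comap (S.proj a) (𝓝 (S.proj a x)) := by
  intro a b h
  have hbond : Tendsto (S.bond h) (𝓝 (S.proj b x)) (𝓝 (S.proj a x)) := by
    rw [← S.bond_comp_proj h]
    exact (S.bond_cont h).tendsto _
  calc comap (S.proj b) (𝓝 (S.proj b x))
      ≤ comap (S.proj b) (comap (S.bond h) (𝓝 (S.proj a x))) := comap_mono hbond.le_comap
    _ = comap (S.proj a) (𝓝 (S.proj a x)) := by rw [comap_comap, S.bond_comp_proj h]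

theorem exists_proj_preimage_subset_of_mem_nhds [Nonempty A] [IsDirectedOrder A]
    (S : InvSpec A) {C : Set A} (hC : IsCofinalSub C) {x : S.limitSet} {U : Set S.limitSet}
    (hU : U ∈ 𝓝 x) :
    ∃ b ∈ C, ∃ V ∈ 𝓝 (S.proj b x), S.proj b ⁻¹' V ⊆ U := by
  have hanti := S.antitone_comap_proj_nhds x
  rw [S.nhds_eq_iInf_comap_proj x, mem_iInf_of_directed hanti.directed_ge] at hU
  obtain ⟨a, ha⟩ := hU
  obtain ⟨b, hbC, hab⟩ := hC a
  exact ⟨b, hbC, mem_comap.mp (hanti hab ha)⟩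

end InvSpec

theorem skeletal_limMap_of_limitSquares_general [Nonempty A] [IsDirectedOrder A]
    {C : Set A} (hC : IsCofinalSub C) {S T : InvSpec A} (F : SpecMor S T)
    (hT : ∀ b ∈ C, DenseRange (T.proj b)) (hsq : ∀ b ∈ C, LimitSquareSkeletal F b) :
    Skeletal F.limMap := by
  intro U hU ⟨x, hx⟩
  obtain ⟨b, hb, V, hV, hVU⟩ := S.exists_proj_preimage_subset_of_mem_nhds hC (hU.mem_nhds hx)
  have hV_int : (interior (closure (F.limMap '' (S.proj b ⁻¹' V)))).Nonempty :=
    (hsq b hb).nonempty_interior_closure_image (T.continuous_proj b) (hT b hb) hV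
  exact hV_int.mono (interior_mono (closure_mono (image_mono hVU)))

/-- If a morphism between inverse spectra over a directed index set, both having surjective
limit projections, has skeletal limit `↓a`-squares for all `a`, then its limit map is
skeletal. -/
theorem skeletal_limMap_of_limitSquares {A : Type u} [PartialOrder A] [Nonempty A]
    (hdir : ∀ a b : A, ∃ c : A, a ≤ c ∧ b ≤ c)
    (S T : InvSpec A) (F : SpecMor S T)
    (hS : ∀ a : A, Function.Surjective (S.proj a))
    (hT : ∀ a : A, Function.Surjective (T.proj a))
    (hsq : ∀ a : A, LimitSquareSkeletal F a) :
    Skeletal F.limMap := by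
  have : IsDirectedOrder A := ⟨hdir⟩
  exact skeletal_limMap_of_limitSquares_general (C := univ) (fun a => ⟨a, mem_univ a, le_rfl⟩) F
    (fun a _ => (hT a).denseRange) fun a _ => hsq a
end
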